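/- arXiv:1704.01747 — 2 statements merged into one kernel-verified Lean document; each statement's English description precedes it below -/
import Mathlib

section
/- For the pressure law p(ρ) = ρ^γ with γ ≥ 1 and internal energy ε(ρ) = ρ^(γ-1)/(γ-1) when γ > 1 (so that p(r) = r^2 ε'(r)), for any two distinct positive reals r ≠ s the quantity P(r,s) := p(r) + p(s) - 2·r·s·(ε(r) - ε(s))/(r - s) is strictly positive. -/
open Real

/-!
In terms of the specific volume `v = 1 / ρ`, the relation `p = ρ² ε'` says that `v ↦ -ε (1 / v)` is
an antiderivative of `q v = p (1 / v)`, and the factor `r s / (r - s)` is the reciprocal of the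
distance between the volumes `1 / r` and `1 / s`. Hence `P(r, s)` is twice the error of the
trapezoidal rule for the mean of `q` between these two volumes, and it is positive as soon as `q` is
strictly convex (Hermite–Hadamard). For `p ρ = ρ ^ γ` one has `q v = v ^ (-γ)`.
-/

open Set

theorem lt_chord_of_strictConvexOn {𝕜 : Type*} [Field 𝕜] [LinearOrder 𝕜] [IsStrictOrderedRing 𝕜]
    {S : Set 𝕜} {f : 𝕜 → 𝕜} (hf : StrictConvexOn 𝕜 S f) {a b x : 𝕜} (ha : a ∈ S) (hb : b ∈ S)
    (hx : x ∈ Ioo a b) : f x < f a + (f b - f a) / (b - a) * (x - a) := by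
  have hslope : (f x - f a) / (x - a) < (f b - f a) / (b - a) :=
    hf.secant_strict_mono_aux2 ha hb hx.1 hx.2
  exact sub_lt_iff_lt_add'.1 ((div_lt_iff₀ (sub_pos.2 hx.1)).1 hslope)

theorem hasDerivAt_affine_antideriv (c m a x : ℝ) :
    HasDerivAt (fun y ↦ c * y + m / 2 * (y - a) ^ 2) (c + m * (x - a)) x := by
  have hlin : HasDerivAt (fun y ↦ c * y) c x := hasDerivAt_const_mul c
  have hquad := (((hasDerivAt_id x).sub_const a).pow 2).const_mul (m / 2)
  refine (hlin.add hquad).congr_deriv ?_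
  simp only [id]
  ring

theorem sub_lt_trapezoid_of_strictConvexOn {f F : ℝ → ℝ} {a b : ℝ} (hab : a < b)
    (hf : StrictConvexOn ℝ (Icc a b) f) (hFc : ContinuousOn F (Icc a b))
    (hF : ∀ x ∈ Ioo a b, HasDerivAt F (f x) x) :
    F b - F a < (b - a) * ((f a + f b) / 2) := by
  set m := (f b - f a) / (b - a)
  let L : ℝ → ℝ := fun x ↦ f a * x + m / 2 * (x - a) ^ 2
  have hL (x : ℝ) : HasDerivAt L (f a + m * (x - a)) x := hasDerivAt_affine_antideriv (f a) m a x
  have ha : a ∈ Icc a b := left_mem_Icc.2 hab.le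
  have hb : b ∈ Icc a b := right_mem_Icc.2 hab.le
  have hmono : StrictMonoOn (fun x ↦ L x - F x) (Icc a b) := by
    refine strictMonoOn_of_deriv_pos (convex_Icc a b)
      (ContinuousOn.sub (fun x _ ↦ (hL x).continuousAt.continuousWithinAt) hFc) fun x hx ↦ ?_
    rw [interior_Icc] at hx
    rw [((hL x).fun_sub (hF x hx)).deriv]
    exact sub_pos.2 (lt_chord_of_strictConvexOn hf ha hb hx)
  have hlt : L a - F a < L b - F b := hmono ha hb hab
  have hLab : L b - L a = (b - a) * ((f a + f b) / 2) := by
    have hmul : m * (b - a) = f b - f a := div_mul_cancel₀ _ (sub_ne_zero.2 hab.ne')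
    simp only [L]
    linear_combination (b - a) / 2 * hmul
  linarith

theorem strictConvexOn_rpow_Ioi {m : ℝ} (hm : m < 0 ∨ 1 < m) :
    StrictConvexOn ℝ (Ioi 0) fun x : ℝ ↦ x ^ m := by
  have hcoeff : 0 < m * (m - 1) := by
    rcases hm with hm | hm <;> nlinarith
  refine strictConvexOn_of_deriv2_pos' (convex_Ioi 0)
    (fun x hx ↦ (continuousAt_rpow_const x m (.inl (ne_of_gt hx))).continuousWithinAt)
    fun x hx ↦ ?_
  rw [iter_deriv_rpow_const, descPochhammer_eval_eq_prod_range]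
  simp only [Finset.prod_range_succ, Finset.prod_range_zero, Nat.cast_zero, Nat.cast_one,
    sub_zero, one_mul]
  exact mul_pos hcoeff (rpow_pos_of_pos hx _)

/-- The quantity `P(r, s)` of a fluid with pressure law `p` and specific internal energy `ε`, as
functions of the density. On the diagonal `r = s` the difference quotient takes the value `0`, not
the derivative of `ε`. -/
noncomputable def pressureDefect (p ε : ℝ → ℝ) (r s : ℝ) : ℝ :=
  p r + p s - 2 * r * s * ((ε r - ε s) / (r - s))

theorem pressureDefect_comm (p ε : ℝ → ℝ) (r s : ℝ) :
    pressureDefect p ε r s = pressureDefect p ε s r := by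
  unfold pressureDefect
  rw [← neg_div_neg_eq (ε r - ε s), neg_sub, neg_sub]
  ring

theorem hasDerivAt_neg_energy_comp_inv {p ε : ℝ → ℝ} {v : ℝ} (hv : v ≠ 0)
    (hε : HasDerivAt ε (p v⁻¹ / v⁻¹ ^ 2) v⁻¹) :
    HasDerivAt (fun u ↦ -ε u⁻¹) (p v⁻¹) v := by
  refine (hε.comp v (hasDerivAt_inv hv)).fun_neg.congr_deriv ?_
  field_simp

theorem pressureDefect_pos {p ε : ℝ → ℝ} (hε : ∀ ρ, 0 < ρ → HasDerivAt ε (p ρ / ρ ^ 2) ρ)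
    (hp : StrictConvexOn ℝ (Ioi 0) fun v ↦ p v⁻¹) {r s : ℝ} (hr : 0 < r) (hs : 0 < s)
    (hrs : r ≠ s) : 0 < pressureDefect p ε r s := by
  wlog hlt : s < r generalizing r s
  · rw [pressureDefect_comm]
    exact this hs hr hrs.symm (hrs.lt_or_gt.resolve_right hlt)
  have hpos : ∀ v ∈ Icc r⁻¹ s⁻¹, 0 < v := fun v hv ↦ (inv_pos.2 hr).trans_le hv.1
  have hderiv : ∀ v ∈ Icc r⁻¹ s⁻¹, HasDerivAt (fun u ↦ -ε u⁻¹) (p v⁻¹) v := fun v hv ↦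
    hasDerivAt_neg_energy_comp_inv (hpos v hv).ne' (hε _ (inv_pos.2 (hpos v hv)))
  have htrapezoid : -ε s - -ε r < (s⁻¹ - r⁻¹) * ((p r + p s) / 2) := by
    simpa only [inv_inv] using sub_lt_trapezoid_of_strictConvexOn ((inv_lt_inv₀ hr hs).2 hlt)
      (hp.subset hpos (convex_Icc _ _)) (fun v hv ↦ (hderiv v hv).continuousAt.continuousWithinAt)
      (fun v hv ↦ hderiv v (Ioo_subset_Icc_self hv))
  have hsub : 0 < r - s := sub_pos.2 hlt
  have hdefect : pressureDefect p ε r s = 2 * r * s / (r - s) *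
      ((s⁻¹ - r⁻¹) * ((p r + p s) / 2) - (-ε s - -ε r)) := by
    unfold pressureDefect
    field_simp
    ring
  rw [hdefect]
  exact mul_pos (by positivity) (sub_pos.2 htrapezoid)

theorem hasDerivAt_polytropic_energy {γ ρ : ℝ} (hγ : γ ≠ 1) (hρ : 0 < ρ) :
    HasDerivAt (fun x : ℝ ↦ x ^ (γ - 1) / (γ - 1)) (ρ ^ γ / ρ ^ 2) ρ := by
  refine ((hasDerivAt_rpow_const (.inl hρ.ne')).div_const (γ - 1)).congr_deriv ?_
  rw [mul_div_cancel_left₀ _ (sub_ne_zero.2 hγ), ← rpow_two, ← rpow_sub hρ]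
  ring_nf

theorem P_pos_general (γ : ℝ) (hγ : γ < -1 ∨ 0 < γ) (hγ1 : γ ≠ 1) (r s : ℝ) (hr : 0 < r)
    (hs : 0 < s) (hrs : r ≠ s) :
    r ^ γ + s ^ γ - 2 * r * s * ((r ^ (γ - 1) / (γ - 1) - s ^ (γ - 1) / (γ - 1)) / (r - s))
      > 0 := by
  have hconvex : StrictConvexOn ℝ (Ioi 0) fun v : ℝ ↦ v⁻¹ ^ γ := by
    have hexp : -γ < 0 ∨ 1 < -γ := hγ.symm.imp neg_neg_of_pos lt_neg_of_lt_neg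
    exact (strictConvexOn_rpow_Ioi hexp).congr fun v _ ↦ rpow_neg_eq_inv_rpow v γ
  exact pressureDefect_pos (p := fun ρ ↦ ρ ^ γ)
    (fun _ hρ ↦ hasDerivAt_polytropic_energy hγ1 hρ) hconvex hr hs hrs

theorem P_pos (γ : ℝ) (hγ : 1 < γ) (r s : ℝ) (hr : 0 < r) (hs : 0 < s) (hrs : r ≠ s) :
    r ^ γ + s ^ γ - 2 * r * s * ((r ^ (γ - 1) / (γ - 1) - s ^ (γ - 1) / (γ - 1)) / (r - s)) > 0 :=
  P_pos_general γ (.inr (zero_lt_one.trans hγ)) hγ.ne' r s hr hs hrs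
end

section
/- Let p be a C² function with p' > 0 and p'' ≥ 0 on (0,∞), let 0 < ρ₋ < ρ₊ and K, L > 0, and set ρ̃ = (K²ρ₊ + L²ρ₋)/(K²+L²). Then the function ε̃₁(ρ₁) := p(ρ₊) − p(ρ₁) − ρ₊·(L√(1 − ρ₋/ρ₁) − K√(ρ₊/ρ₁ − 1))² is concave on the interval (ρ₋, ρ̃). -/
open Real

/-!
The function `(x, y) ↦ (√x - √y) ^ 2` is convex on the positive quadrant by Cauchy–Schwarz and,
where `y ≤ x`, it is increasing in `x` and decreasing in `y`. Hence `(√f - √g) ^ 2` is convex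
whenever `f` is convex, `g` is concave and `0 ≤ g ≤ f`. Now take `f r = K ^ 2 * (ρ₊ / r - 1)` and
`g r = L ^ 2 * (1 - ρ₋ / r)`: the condition `0 ≤ g r` says `ρ₋ ≤ r`, and `g r ≤ f r` says `r ≤ ρ̃`.
-/

lemma concaveOn_sqrt_mul_sqrt : ConcaveOn ℝ (Set.Ici 0) fun z : ℝ × ℝ => √z.1 * √z.2 := by
  refine ⟨convex_Ici 0, ?_⟩
  rintro ⟨x₁, y₁⟩ ⟨hx₁, hy₁⟩ ⟨x₂, y₂⟩ ⟨hx₂, hy₂⟩ s t hs ht -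
  simp only [Prod.fst_zero, Prod.snd_zero] at hx₁ hy₁ hx₂ hy₂
  have smul_sqrt_mul_sqrt {c : ℝ} (hc : 0 ≤ c) (x y : ℝ) :
      c * (√x * √y) = √(c * x) * √(c * y) := by
    rw [sqrt_mul hc, sqrt_mul hc, mul_mul_mul_comm, mul_self_sqrt hc]
  have cauchy_schwarz := Real.sum_sqrt_mul_sqrt_le Finset.univ
    (f := ![s * x₁, t * x₂]) (g := ![s * y₁, t * y₂])
    (Fin.forall_fin_two.2 ⟨mul_nonneg hs hx₁, mul_nonneg ht hx₂⟩)
    (Fin.forall_fin_two.2 ⟨mul_nonneg hs hy₁, mul_nonneg ht hy₂⟩)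
  simpa [Fin.sum_univ_two, smul_sqrt_mul_sqrt hs, smul_sqrt_mul_sqrt ht] using cauchy_schwarz

lemma convexOn_sq_sqrt_sub_sqrt :
    ConvexOn ℝ (Set.Ici 0) fun z : ℝ × ℝ => (√z.1 - √z.2) ^ 2 := by
  have fst_add_snd : ConvexOn ℝ (Set.Ici (0 : ℝ × ℝ)) fun z => z.1 + z.2 :=
    (LinearMap.fst ℝ ℝ ℝ + LinearMap.snd ℝ ℝ ℝ).convexOn (convex_Ici 0)
  refine (fst_add_snd.sub (concaveOn_sqrt_mul_sqrt.smul zero_le_two)).congr ?_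
  rintro ⟨x, y⟩ ⟨hx, hy⟩
  simp only [Pi.sub_apply, smul_eq_mul, sub_sq, sq_sqrt hx, sq_sqrt hy]
  ring

lemma sq_sqrt_sub_sqrt_le_sq_sqrt_sub_sqrt {x y x' y' : ℝ} (hyx : y ≤ x) (hx : x ≤ x')
    (hy : y' ≤ y) : (√x - √y) ^ 2 ≤ (√x' - √y') ^ 2 :=
  pow_le_pow_left₀ (sub_nonneg.2 (sqrt_le_sqrt hyx))
    (sub_le_sub (sqrt_le_sqrt hx) (sqrt_le_sqrt hy)) 2

lemma convexOn_sq_sqrt_sub_sqrt_comp {E : Type*} [AddCommMonoid E] [Module ℝ E] {S : Set E}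
    {f g : E → ℝ} (hf : ConvexOn ℝ S f) (hg : ConcaveOn ℝ S g)
    (hg_nonneg : ∀ x ∈ S, 0 ≤ g x) (hgf : ∀ x ∈ S, g x ≤ f x) :
    ConvexOn ℝ S fun x => (√(f x) - √(g x)) ^ 2 := by
  have mem_quadrant {x : E} (hx : x ∈ S) : (f x, g x) ∈ Set.Ici (0 : ℝ × ℝ) :=
    ⟨(hg_nonneg x hx).trans (hgf x hx), hg_nonneg x hx⟩
  refine ⟨hf.1, fun x hx y hy s t hs ht hst => ?_⟩
  calc (√(f (s • x + t • y)) - √(g (s • x + t • y))) ^ 2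
      ≤ (√(s • f x + t • f y) - √(s • g x + t • g y)) ^ 2 :=
        sq_sqrt_sub_sqrt_le_sq_sqrt_sub_sqrt (hgf _ (hf.1 hx hy hs ht hst))
          (hf.2 hx hy hs ht hst) (hg.2 hx hy hs ht hst)
    _ ≤ s • (√(f x) - √(g x)) ^ 2 + t • (√(f y) - √(g y)) ^ 2 :=
        convexOn_sq_sqrt_sub_sqrt.2 (mem_quadrant hx) (mem_quadrant hy) hs ht hst

lemma convexOn_const_div {c : ℝ} (hc : 0 ≤ c) : ConvexOn ℝ (Set.Ioi 0) fun r : ℝ => c / r := by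
  simpa [div_eq_mul_inv] using (convexOn_zpow (-1)).smul hc

lemma mul_one_sub_div_le_mul_div_sub_one_iff {a b k l r : ℝ} (hkl : 0 < k + l) (hr : 0 < r) :
    l * (1 - a / r) ≤ k * (b / r - 1) ↔ r ≤ (k * b + l * a) / (k + l) := by
  rw [one_sub_div hr.ne', div_sub_one hr.ne', ← mul_div_assoc, ← mul_div_assoc,
    div_le_div_iff_of_pos_right hr, le_div_iff₀ hkl]
  constructor <;> intro h <;> linarith

lemma convexOn_sq_mul_sqrt_sub_mul_sqrt {a b K L : ℝ} (ha : 0 < a) (hb : 0 ≤ b) (hK : 0 < K)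
    (hL : 0 ≤ L) :
    ConvexOn ℝ (Set.Icc a ((K ^ 2 * b + L ^ 2 * a) / (K ^ 2 + L ^ 2)))
      fun r => (K * √(b / r - 1) - L * √(1 - a / r)) ^ 2 := by
  set I := Set.Icc a ((K ^ 2 * b + L ^ 2 * a) / (K ^ 2 + L ^ 2))
  have pos {r : ℝ} (hr : r ∈ I) : 0 < r := ha.trans_le hr.1
  have convexOn_div {c : ℝ} (hc : 0 ≤ c) : ConvexOn ℝ I fun r => c / r :=
    (convexOn_const_div hc).subset (fun _ => pos) (convex_Icc _ _)
  have hf : ConvexOn ℝ I fun r => K ^ 2 * (b / r - 1) :=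
    ((convexOn_div hb).sub (concaveOn_const 1 (convex_Icc _ _))).smul (sq_nonneg K)
  have hg : ConcaveOn ℝ I fun r => L ^ 2 * (1 - a / r) :=
    ((concaveOn_const 1 (convex_Icc _ _)).sub (convexOn_div ha.le)).smul (sq_nonneg L)
  have hg_nonneg : ∀ r ∈ I, 0 ≤ L ^ 2 * (1 - a / r) := fun r hr =>
    mul_nonneg (sq_nonneg L) (sub_nonneg.2 ((div_le_one (pos hr)).2 hr.1))
  have hgf : ∀ r ∈ I, L ^ 2 * (1 - a / r) ≤ K ^ 2 * (b / r - 1) := fun r hr =>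
    (mul_one_sub_div_le_mul_div_sub_one_iff (by positivity) (pos hr)).2 hr.2
  simpa only [sqrt_mul (sq_nonneg _), sqrt_sq hK.le, sqrt_sq hL] using
    convexOn_sq_sqrt_sub_sqrt_comp hf hg hg_nonneg hgf

lemma convexOn_of_contDiffOn_two_of_deriv2_nonneg {D : Set ℝ} {f : ℝ → ℝ} (hD : Convex ℝ D)
    (hD_open : IsOpen D) (hf : ContDiffOn ℝ 2 f D) (hf'' : ∀ x ∈ D, 0 ≤ deriv (deriv f) x) :
    ConvexOn ℝ D f :=
  convexOn_of_deriv2_nonneg' hD (hf.differentiableOn two_ne_zero)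
    ((hf.deriv_of_isOpen hD_open one_add_one_eq_two.le).differentiableOn one_ne_zero) hf''

theorem eps_tilde_concave_general {p : ℝ → ℝ} {ρm ρp K L : ℝ} (hρm : 0 < ρm) (hρp : 0 ≤ ρp)
    (hK : 0 < K) (hL : 0 ≤ L)
    (hp : ConvexOn ℝ (Set.Icc ρm ((K ^ 2 * ρp + L ^ 2 * ρm) / (K ^ 2 + L ^ 2))) p) :
    ConcaveOn ℝ (Set.Icc ρm ((K ^ 2 * ρp + L ^ 2 * ρm) / (K ^ 2 + L ^ 2)))
      (fun ρ₁ => p ρp - p ρ₁ - ρp * (L * √(1 - ρm / ρ₁) - K * √(ρp / ρ₁ - 1)) ^ 2) := by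
  simp only [sub_sq_comm (L * _)]
  exact ((concaveOn_const (p ρp) (convex_Icc _ _)).sub hp).sub
    ((convexOn_sq_mul_sqrt_sub_mul_sqrt hρm hρp hK hL).smul hρp)

theorem eps_tilde_concave (p : ℝ → ℝ) (hp : ContDiffOn ℝ 2 p (Set.Ioi 0))
    (hp' : ∀ r > 0, 0 < deriv p r) (hp'' : ∀ r > 0, 0 ≤ deriv (deriv p) r)
    (ρm ρp K L : ℝ) (hρm : 0 < ρm) (hρp : ρm < ρp) (hK : 0 < K) (hL : 0 < L) :
    ConcaveOn ℝ (Set.Ioo ρm ((K ^ 2 * ρp + L ^ 2 * ρm) / (K ^ 2 + L ^ 2)))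
      (fun ρ₁ => p ρp - p ρ₁ -
        ρp * (L * Real.sqrt (1 - ρm / ρ₁) - K * Real.sqrt (ρp / ρ₁ - 1)) ^ 2) := by
  have p_convex : ConvexOn ℝ (Set.Ioi 0) p :=
    convexOn_of_contDiffOn_two_of_deriv2_nonneg (convex_Ioi 0) isOpen_Ioi hp hp''
  exact (eps_tilde_concave_general hρm (hρm.trans hρp).le hK hL.le
    (p_convex.subset (fun _ hr => hρm.trans_le hr.1) (convex_Icc _ _))).subset
    Set.Ioo_subset_Icc_self (convex_Ioo _ _)
end
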